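/- Let G be a finite simple bipartite graph of even order n with two distinct vertices u, v such that N(u) = N(v). Then the HL-index of G is 0, i.e., λ_{n/2}(G) = λ_{n/2+1}(G) = 0. -/

import Mathlib

open SimpleGraph Matrix

theorem adjMatrix_isHermitian {V : Type} [Fintype V] [DecidableEq V]
    (G : SimpleGraph V) [DecidableRel G.Adj] : (G.adjMatrix ℝ).IsHermitian := by
  ext i j
  simp [Matrix.conjTranspose_apply, SimpleGraph.adj_comm]

/-- Multiset of adjacency eigenvalues. -/
noncomputable def adjSpectrum {V : Type} [Fintype V] [DecidableEq V]
    (G : SimpleGraph V) [DecidableRel G.Adj] : Multiset ℝ :=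
  Finset.univ.val.map (adjMatrix_isHermitian G).eigenvalues

/-- the i-th largest adjacency eigenvalue (1-indexed). -/
noncomputable def eigval {V : Type} [Fintype V] [DecidableEq V]
    (G : SimpleGraph V) [DecidableRel G.Adj] (i : ℕ) : ℝ :=
  ((adjSpectrum G).sort (· ≤ ·)).getD (Fintype.card V - i) 0

/-!
Conjugating the adjacency matrix of a bipartite graph by the diagonal matrix of signs of the two
colour classes negates it, so the spectrum is symmetric: `λ_(n + 1 - i) = -λ_i`. For `n = 2 * m`
this gives `λ_(m + 1) = -λ_m ≤ 0 ≤ λ_m`, with no eigenvalue strictly between these two. Hence if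
some eigenvalue is zero, then so are both middle ones.
Twins supply the zero eigenvalue, as they make two rows of the adjacency matrix equal.
-/

open Polynomial

theorem sort_map_neg {α : Type*} [AddCommGroup α] [LinearOrder α] [IsOrderedAddMonoid α]
    (s : Multiset α) :
    (s.map Neg.neg).sort (· ≤ ·) = ((s.sort (· ≤ ·)).map Neg.neg).reverse := by
  refine List.Perm.eq_of_pairwise' (Multiset.pairwise_sort _ _) ?_ (Multiset.coe_eq_coe.mp ?_)
  · rw [List.pairwise_reverse, List.pairwise_map]
    exact (Multiset.pairwise_sort s _).imp neg_le_neg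
  · rw [Multiset.sort_eq, Multiset.coe_reverse, ← Multiset.map_coe, Multiset.sort_eq]

theorem charpoly_neg {n R : Type*} [Fintype n] [DecidableEq n] [CommRing R] (A : Matrix n n R) :
    (-A).charpoly = (-1) ^ Fintype.card n * A.charpoly.comp (-X) := by
  have hneg : (-A).charmatrix = -(compRingHom (-X)).mapMatrix A.charmatrix := by
    ext1 i j
    by_cases h : i = j <;> simp [h, add_comm]
  rw [charpoly, hneg, det_neg, ← RingHom.map_det, coe_compRingHom_apply, charpoly]

theorem roots_charpoly_neg {n R : Type*} [Fintype n] [DecidableEq n] [CommRing R] [IsDomain R]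
    (A : Matrix n n R) : (-A).charpoly.roots = A.charpoly.roots.map Neg.neg := by
  rw [charpoly_neg, ← C_1, ← C_neg, ← C_pow, roots_C_mul _ (by simp), roots_comp_neg_X]

section AdjMatrix

variable {V : Type*} {G : SimpleGraph V}

theorem isBipartite_of_forall_adj_mem_iff_notMem {s : Set V}
    (hs : ∀ a b : V, G.Adj a b → (a ∈ s ↔ b ∉ s)) : G.IsBipartite := by
  refine isBipartite_iff_exists_isBipartiteWith.mpr ⟨s, sᶜ, disjoint_compl_right, fun a b hab ↦ ?_⟩
  have := hs a b hab
  simp only [Set.mem_compl_iff]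
  tauto

variable [Fintype V] [DecidableEq V] [DecidableRel G.Adj]

theorem charpoly_neg_adjMatrix (hG : G.IsBipartite) (R : Type*) [CommRing R] :
    (-G.adjMatrix R).charpoly = (G.adjMatrix R).charpoly := by
  obtain ⟨color⟩ := hG
  let D : Matrix V V R := diagonal fun a ↦ (-1) ^ (color a : ℕ)
  have hDD : D * D = 1 := by
    simp [D, ← mul_pow]
  have hconj : -G.adjMatrix R = D * (G.adjMatrix R * D) := by
    ext a b
    by_cases hab : G.Adj a b
    · have hsum : (color a : ℕ) + color b = 1 := by
        have hne := color.valid hab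
        lia
      simp [D, hab, ← pow_add, hsum]
    · simp [D, hab]
  rw [hconj, charpoly_mul_comm, mul_assoc, hDD, mul_one]

theorem det_adjMatrix_eq_zero_of_neighborSet_eq {u v : V} (huv : u ≠ v)
    (hN : G.neighborSet u = G.neighborSet v) (R : Type*) [CommRing R] :
    (G.adjMatrix R).det = 0 := by
  refine det_zero_of_row_eq huv (funext fun w ↦ ?_)
  have hw : G.Adj u w ↔ G.Adj v w := Set.ext_iff.mp hN w
  simp only [adjMatrix_apply, hw]

end AdjMatrix

section Eigval

variable {V : Type} [Fintype V] [DecidableEq V] {G : SimpleGraph V} [DecidableRel G.Adj]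

theorem length_sort_adjSpectrum :
    ((adjSpectrum G).sort (· ≤ ·)).length = Fintype.card V := by
  simp [adjSpectrum]

theorem roots_charpoly_adjMatrix : (G.adjMatrix ℝ).charpoly.roots = adjSpectrum G :=
  (adjMatrix_isHermitian G).roots_charpoly_eq_eigenvalues

theorem map_neg_adjSpectrum (hG : G.IsBipartite) :
    (adjSpectrum G).map Neg.neg = adjSpectrum G := by
  rw [← roots_charpoly_adjMatrix, ← roots_charpoly_neg, charpoly_neg_adjMatrix hG]

theorem zero_mem_adjSpectrum_iff : 0 ∈ adjSpectrum G ↔ (G.adjMatrix ℝ).det = 0 := by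
  simp [(adjMatrix_isHermitian G).det_eq_prod_eigenvalues, Finset.prod_eq_zero_iff, adjSpectrum]

theorem eigval_eq_getElem {i : ℕ} (hi : i ∈ Set.Icc 1 (Fintype.card V)) :
    eigval G i = ((adjSpectrum G).sort (· ≤ ·))[Fintype.card V - i]'(by
      rw [length_sort_adjSpectrum]; grind) :=
  List.getD_eq_getElem _ _ _

theorem antitoneOn_eigval : AntitoneOn (eigval G) (Set.Icc 1 (Fintype.card V)) := by
  intro i hi j hj hij
  rw [eigval_eq_getElem hi, eigval_eq_getElem hj]
  exact (Multiset.pairwise_sort _ _).sortedLE.getElem_le_getElem_of_le (by lia)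

theorem exists_eigval_eq {x : ℝ} (hx : x ∈ adjSpectrum G) :
    ∃ i ∈ Set.Icc 1 (Fintype.card V), eigval G i = x := by
  obtain ⟨k, hk, rfl⟩ := List.getElem_of_mem ((Multiset.mem_sort (· ≤ ·)).mpr hx)
  rw [length_sort_adjSpectrum] at hk
  have hi : Fintype.card V - k ∈ Set.Icc 1 (Fintype.card V) := by grind
  refine ⟨_, hi, ?_⟩
  simp only [eigval_eq_getElem hi, Nat.sub_sub_self hk.le]

theorem eigval_card_add_one_sub (hG : G.IsBipartite) {i : ℕ}
    (hi : i ∈ Set.Icc 1 (Fintype.card V)) :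
    eigval G (Fintype.card V + 1 - i) = -eigval G i := by
  have hsort : (adjSpectrum G).sort (· ≤ ·) =
      (((adjSpectrum G).sort (· ≤ ·)).map Neg.neg).reverse := by
    rw [← sort_map_neg, map_neg_adjSpectrum hG]
  have hi' : Fintype.card V + 1 - i ∈ Set.Icc 1 (Fintype.card V) := by grind
  have hidx : Fintype.card V - 1 - (Fintype.card V - (Fintype.card V + 1 - i)) =
      Fintype.card V - i := by grind
  rw [eigval_eq_getElem hi, eigval_eq_getElem hi', List.getElem_of_eq hsort]
  simp only [List.getElem_reverse, List.getElem_map, List.length_map, length_sort_adjSpectrum, hidx]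

end Eigval

theorem hl_index_zero_of_bipartite_with_twins_general
    {V : Type} [Fintype V] [DecidableEq V]
    (G : SimpleGraph V) [DecidableRel G.Adj]
    (heven : Even (Fintype.card V)) (hbip : G.IsBipartite) (hdet : (G.adjMatrix ℝ).det = 0) :
    eigval G (Fintype.card V / 2) = 0 ∧ eigval G (Fintype.card V / 2 + 1) = 0 := by
  obtain ⟨i, hi, hzero⟩ := exists_eigval_eq (zero_mem_adjSpectrum_iff.mpr hdet)
  set m := Fintype.card V / 2
  have hcard : Fintype.card V = m + m := by grind
  have hm : m ∈ Set.Icc 1 (Fintype.card V) := by grind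
  have hm' : m + 1 ∈ Set.Icc 1 (Fintype.card V) := by grind
  have hneg : eigval G (m + 1) = -eigval G m := by
    rw [← eigval_card_add_one_sub hbip hm]
    congr 1
    lia
  have hle : eigval G (m + 1) ≤ eigval G m := antitoneOn_eigval hm hm' m.le_succ
  rcases Nat.lt_or_ge m i with hlt | hge
  · have : eigval G i ≤ eigval G (m + 1) := antitoneOn_eigval hm' hi hlt
    constructor <;> linarith
  · have : eigval G m ≤ eigval G i := antitoneOn_eigval hi hm hge
    constructor <;> linarith

theorem hl_index_zero_of_bipartite_with_twins
    {V : Type} [Fintype V] [DecidableEq V]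
    (G : SimpleGraph V) [DecidableRel G.Adj]
    (heven : Even (Fintype.card V))
    (hbip : ∃ s : Set V, ∀ a b : V, G.Adj a b → (a ∈ s ↔ b ∉ s))
    (u v : V) (huv : u ≠ v) (hN : G.neighborSet u = G.neighborSet v) :
    eigval G (Fintype.card V / 2) = 0 ∧ eigval G (Fintype.card V / 2 + 1) = 0 :=
  hl_index_zero_of_bipartite_with_twins_general G heven
    (hbip.elim fun _ ↦ isBipartite_of_forall_adj_mem_iff_notMem)
    (det_adjMatrix_eq_zero_of_neighborSet_eq huv hN ℝ)
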